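/- Assume E[X] < ∞. Then there exists a constant v_N ∈ [0,∞) such that X_N(n)/n → v_N and X_1(n)/n → v_N as n → ∞, almost surely and in L¹. -/

import Mathlib

open MeasureTheory ProbabilityTheory Real Filter Set

noncomputable section

/-- One step of the `N`-BRW: each of the `N` particles branches into two, the children jump
according to `jump`, and only the `N` right-most particles are kept; the result is the
sorted (ascending) vector of the `N` retained positions. -/
def brwStep (N : ℕ) (pos : Fin N → ℝ) (jump : Fin N → Fin 2 → ℝ) : Fin N → ℝ := fun i =>
  (((Finset.univ : Finset (Fin N × Fin 2)).val.map fun p => pos p.1 + jump p.1 p.2).sort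
      (· ≤ ·)).getD (N + i) 0

/-- The `N`-BRW started from the sorted configuration `x0`, driven by the jumps `jump`:
`brw N x0 jump n i` is the position `X_{i+1}(n)` of the `(i+1)`-th lowest particle at time `n`. -/
def brw (N : ℕ) (x0 : Fin N → ℝ) (jump : ℕ → Fin N → Fin 2 → ℝ) : ℕ → Fin N → ℝ
  | 0 => x0
  | n + 1 => brwStep N (brw N x0 jump n) (jump n)

/-- Position `X_N(n)` of the right-most particle of the `N`-BRW started at the origin. -/
def brwMax (N : ℕ) (jump : ℕ → Fin N → Fin 2 → ℝ) (n : ℕ) : ℝ :=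
  ⨆ i, brw N (fun _ => 0) jump n i

/-- Position `X_1(n)` of the left-most particle of the `N`-BRW started at the origin. -/
def brwMin (N : ℕ) (jump : ℕ → Fin N → Fin 2 → ℝ) (n : ℕ) : ℝ :=
  ⨅ i, brw N (fun _ => 0) jump n i

/-!
Along the shift of the environment the maximum `M n` of the `N`-BRW is subadditive and its minimum
`m n` superadditive: replace the configuration at time `m` by `N` particles at its extreme position.
By Fekete's lemma `E[M n] / n` converges to some `v`. The progeny of the top particle doubles at
each generation until it fills the population, so `M n - m n` is bounded by the jumps of the last
`N` generations and `E[m n] / n` has the same limit. Cutting `[0, n)` into i.i.d. blocks of a fixed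
length `k`, the strong law of large numbers bounds `M n / n` above by `E[M k] / k` and `m n / n`
below by `E[m k] / k` asymptotically; as `m n ≤ M n`, letting `k` grow gives almost sure
convergence of both to `v`. Both `|M n| / n` and `|m n| / n` are at most the average of the norms
of the jumps, which is uniformly integrable, whence convergence in `L¹`.
-/

open scoped Finset Topology

lemma le_getElem_iff_le_countP {α : Type*} [LinearOrder α] {l : List α}
    (hl : l.Pairwise (· ≤ ·)) (a : α) {j : ℕ} (hj : j < l.length) :
    a ≤ l[j] ↔ l.length - j ≤ l.countP (a ≤ ·) := by
  induction l generalizing j with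
  | nil => simp at hj
  | cons x t ih =>
    rw [List.pairwise_cons] at hl
    have hcount : a ≤ x → t.countP (a ≤ ·) = t.length := fun hax =>
      List.countP_eq_length.2 fun y hy => by simpa using hax.trans (hl.1 y hy)
    have hlen := List.countP_le_length (p := (decide <| a ≤ ·)) (l := t)
    cases j with
    | zero => grind
    | succ j =>
      have := ih hl.2 (j := j) (by simpa using hj)
      grind

lemma card_filter_sub_le (n d : ℕ) : #{i : Fin n | n - i ≤ d} = min n d := by
  rw [← Fin.card_filter_val_lt (n := n) (m := d)]
  refine Finset.card_equiv Fin.revPerm fun i => ?_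
  simp only [Finset.mem_filter_univ, Fin.revPerm_apply, Fin.val_rev]
  omega

section Step

variable {N : ℕ}

lemma le_brwStep_iff (x : Fin N → ℝ) (jump : Fin N → Fin 2 → ℝ) (i : Fin N) (a : ℝ) :
    a ≤ brwStep N x jump i ↔ N - i ≤ #{p : Fin N × Fin 2 | a ≤ x p.1 + jump p.1 p.2} := by
  set s := (Finset.univ : Finset (Fin N × Fin 2)).val.map fun p => x p.1 + jump p.1 p.2 with hs
  have hlen : (s.sort (· ≤ ·)).length = 2 * N := by simp [hs, mul_comm]
  have hcount : (s.sort (· ≤ ·)).countP (a ≤ ·) =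
      #{p : Fin N × Fin 2 | a ≤ x p.1 + jump p.1 p.2} := by
    rw [← Multiset.coe_countP, Multiset.sort_eq, hs, Multiset.countP_map]
    rfl
  have hi : N + (i : ℕ) < (s.sort (· ≤ ·)).length := by omega
  rw [brwStep, List.getD_eq_getElem _ _ hi,
    le_getElem_iff_le_countP (Multiset.pairwise_sort s _), hlen, hcount]
  omega

lemma card_le_brwStep (x : Fin N → ℝ) (jump : Fin N → Fin 2 → ℝ) (a : ℝ) :
    #{i | a ≤ brwStep N x jump i} =
      min N #{p : Fin N × Fin 2 | a ≤ x p.1 + jump p.1 p.2} := by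
  simp only [le_brwStep_iff, card_filter_sub_le]

lemma brwStep_mono {x x' : Fin N → ℝ} {jump jump' : Fin N → Fin 2 → ℝ} (hx : ∀ i, x i ≤ x' i)
    (hjump : ∀ i j, jump i j ≤ jump' i j) (i : Fin N) :
    brwStep N x jump i ≤ brwStep N x' jump' i :=
  (le_brwStep_iff _ _ _ _).2 <| ((le_brwStep_iff _ _ _ _).1 le_rfl).trans <|
    Finset.card_le_card <| Finset.monotone_filter_right _ fun p _ hp =>
      hp.trans (add_le_add (hx p.1) (hjump p.1 p.2))

lemma brwStep_add_const (x : Fin N → ℝ) (jump : Fin N → Fin 2 → ℝ) (a c : ℝ) (i : Fin N) :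
    brwStep N (fun i => x i + a) (fun i j => jump i j + c) i = brwStep N x jump i + (a + c) := by
  refine eq_of_forall_le_iff fun b => ?_
  have hiff (p : Fin N × Fin 2) :
      b ≤ x p.1 + a + (jump p.1 p.2 + c) ↔ b - (a + c) ≤ x p.1 + jump p.1 p.2 := by
    rw [add_add_add_comm, sub_le_iff_le_add]
  simp only [← sub_le_iff_le_add, le_brwStep_iff, ← hiff]

lemma brwStep_const (a c : ℝ) (i : Fin N) :
    brwStep N (fun _ => a) (fun _ _ => c) i = a + c := by
  refine eq_of_forall_le_iff fun b => ?_
  by_cases hb : b ≤ a + c <;> simp [le_brwStep_iff, hb] <;> omega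

lemma lipschitzWith_brwStep (i : Fin N) :
    LipschitzWith 2 fun p : (Fin N → ℝ) × (Fin N → Fin 2 → ℝ) => brwStep N p.1 p.2 i := by
  refine LipschitzWith.of_le_add_mul 2 fun p q => ?_
  have hpos (i) : p.1 i ≤ q.1 i + dist p q :=
    sub_le_iff_le_add'.1 <| (le_abs_self _).trans <|
      (dist_le_pi_dist p.1 q.1 i).trans (le_max_left _ _)
  have hjump (i j) : p.2 i j ≤ q.2 i j + dist p q :=
    sub_le_iff_le_add'.1 <| (le_abs_self _).trans <| (dist_le_pi_dist (p.2 i) (q.2 i) j).trans <|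
      (dist_le_pi_dist p.2 q.2 i).trans (le_max_right _ _)
  calc brwStep N p.1 p.2 i
      ≤ brwStep N (fun i => q.1 i + dist p q) (fun i j => q.2 i j + dist p q) i :=
        brwStep_mono hpos hjump i
    _ = brwStep N q.1 q.2 i + 2 * dist p q := by rw [brwStep_add_const, two_mul]

lemma min_two_mul_card_le_brwStep (x : Fin N → ℝ) {jump : Fin N → Fin 2 → ℝ} {c : ℝ}
    (hc : ∀ i j, c ≤ jump i j) (a : ℝ) :
    min N (2 * #{i | a ≤ x i}) ≤ #{i | a + c ≤ brwStep N x jump i} := by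
  rw [card_le_brwStep]
  refine min_le_min_left _ ?_
  calc 2 * #{i | a ≤ x i}
      = #(({i | a ≤ x i} : Finset (Fin N)) ×ˢ (Finset.univ : Finset (Fin 2))) := by
        simp [mul_comm]
    _ ≤ #{p : Fin N × Fin 2 | a + c ≤ x p.1 + jump p.1 p.2} :=
        Finset.card_le_card fun p hp => by
          simp only [Finset.mem_product, Finset.mem_filter_univ, Finset.mem_univ, and_true] at hp ⊢
          exact add_le_add hp (hc _ _)

end Step

section Trajectory

variable {N : ℕ}

lemma brw_mono {x x' : Fin N → ℝ} {J J' : ℕ → Fin N → Fin 2 → ℝ} (hx : ∀ i, x i ≤ x' i)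
    (hJ : ∀ l i j, J l i j ≤ J' l i j) (n : ℕ) (i : Fin N) : brw N x J n i ≤ brw N x' J' n i := by
  induction n generalizing i with
  | zero => exact hx i
  | succ n ih => exact brwStep_mono ih (hJ n) i

lemma brw_add_const (x : Fin N → ℝ) (a : ℝ) (J : ℕ → Fin N → Fin 2 → ℝ) (n : ℕ) :
    brw N (fun i => x i + a) J n = fun i => brw N x J n i + a := by
  induction n with
  | zero => rfl
  | succ n ih => ext i; simpa [brw, ih] using brwStep_add_const (brw N x J n) (J n) a 0 i

lemma brw_const (a : ℝ) (c : ℕ → ℝ) (n : ℕ) :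
    brw N (fun _ => a) (fun l _ _ => c l) n = fun _ => a + ∑ l ∈ Finset.range n, c l := by
  induction n with
  | zero => simp [brw]
  | succ n ih => ext i; rw [brw, ih, brwStep_const, Finset.sum_range_succ, add_assoc]

lemma brw_add (x : Fin N → ℝ) (J : ℕ → Fin N → Fin 2 → ℝ) (m n : ℕ) :
    brw N x J (m + n) = brw N (brw N x J m) (fun l => J (m + l)) n := by
  induction n with
  | zero => rfl
  | succ n ih => rw [← add_assoc, brw, ih, brw]

lemma dependsOn_brw (x : Fin N → ℝ) (n : ℕ) :
    DependsOn (fun J : ℕ → Fin N → Fin 2 → ℝ => brw N x J n) (Iio n) := by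
  induction n with
  | zero => exact fun _ _ _ => rfl
  | succ n ih =>
    intro J J' h
    simp only [brw, ih fun l (hl : l < n) => h l (hl.trans n.lt_succ_self), h n n.lt_succ_self]

lemma continuous_brw (x : Fin N → ℝ) (n : ℕ) :
    Continuous fun J : ℕ → Fin N → Fin 2 → ℝ => brw N x J n := by
  induction n with
  | zero => exact continuous_const
  | succ n ih =>
    exact continuous_pi fun i => (lipschitzWith_brwStep i).continuous.comp
      (ih.prodMk (continuous_apply n))

lemma min_two_pow_mul_card_le_brw (x : Fin N → ℝ) {J : ℕ → Fin N → Fin 2 → ℝ} {c : ℕ → ℝ}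
    (hc : ∀ l i j, c l ≤ J l i j) (a : ℝ) (n : ℕ) :
    min N (2 ^ n * #{i | a ≤ x i}) ≤ #{i | a + ∑ l ∈ Finset.range n, c l ≤ brw N x J n i} := by
  induction n with
  | zero => simp [brw]
  | succ n ih =>
    have hstep := min_two_mul_card_le_brwStep (brw N x J n) (hc n)
      (a + ∑ l ∈ Finset.range n, c l)
    simp only [Finset.sum_range_succ, ← add_assoc, pow_succ', mul_assoc, brw]
    omega

end Trajectory

section Extremes

variable {N : ℕ} (J : ℕ → Fin N → Fin 2 → ℝ)

lemma brw_le_brwMax (n : ℕ) (i : Fin N) : brw N (fun _ => 0) J n i ≤ brwMax N J n :=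
  le_ciSup (finite_range _).bddAbove i

lemma brwMin_le_brw (n : ℕ) (i : Fin N) : brwMin N J n ≤ brw N (fun _ => 0) J n i :=
  ciInf_le (finite_range _).bddBelow i

lemma measurable_brwMax (n : ℕ) :
    Measurable fun J : ℕ → Fin N → Fin 2 → ℝ => brwMax N J n :=
  Measurable.iSup fun i => (measurable_pi_iff.1 (continuous_brw _ n).measurable i)

lemma measurable_brwMin (n : ℕ) :
    Measurable fun J : ℕ → Fin N → Fin 2 → ℝ => brwMin N J n :=
  Measurable.iInf fun i => (measurable_pi_iff.1 (continuous_brw _ n).measurable i)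

lemma abs_jump_le_norm (l : ℕ) (i : Fin N) (j : Fin 2) : |J l i j| ≤ ‖J l‖ :=
  (norm_le_pi_norm (J l i) j).trans (norm_le_pi_norm (J l) i)

variable [NeZero N]

lemma brwMin_le_brwMax (n : ℕ) : brwMin N J n ≤ brwMax N J n :=
  (brwMin_le_brw J n 0).trans (brw_le_brwMax J n 0)

lemma brwMax_add_le (m n : ℕ) :
    brwMax N J (m + n) ≤ brwMax N J m + brwMax N (fun l => J (m + l)) n := by
  refine ciSup_le fun i => ?_
  calc brw N (fun _ => 0) J (m + n) i
      ≤ brw N (fun _ => 0 + brwMax N J m) (fun l => J (m + l)) n i := by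
        rw [brw_add]
        exact brw_mono (fun i => by simpa using brw_le_brwMax J m i) (fun _ _ _ => le_rfl) n i
    _ ≤ brwMax N J m + brwMax N (fun l => J (m + l)) n := by
        rw [brw_add_const (fun _ => 0), add_comm]
        exact add_le_add_left (brw_le_brwMax _ n i) _

lemma le_brwMin_add (m n : ℕ) :
    brwMin N J m + brwMin N (fun l => J (m + l)) n ≤ brwMin N J (m + n) := by
  refine le_ciInf fun i => ?_
  calc brwMin N J m + brwMin N (fun l => J (m + l)) n
      ≤ brw N (fun _ => 0 + brwMin N J m) (fun l => J (m + l)) n i := by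
        rw [brw_add_const (fun _ => 0), add_comm]
        exact add_le_add_left (brwMin_le_brw _ n i) _
    _ ≤ brw N (fun _ => 0) J (m + n) i := by
        rw [brw_add]
        exact brw_mono (fun i => by simpa using brwMin_le_brw J m i) (fun _ _ _ => le_rfl) n i

variable {J} in
lemma brwMax_le_sum {c : ℕ → ℝ} (hc : ∀ l i j, J l i j ≤ c l) (n : ℕ) :
    brwMax N J n ≤ ∑ l ∈ Finset.range n, c l :=
  ciSup_le fun i => (brw_mono (fun _ => le_rfl) hc n i).trans_eq <| by rw [brw_const, zero_add]

variable {J} in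
lemma sum_le_brwMin {c : ℕ → ℝ} (hc : ∀ l i j, c l ≤ J l i j) (n : ℕ) :
    ∑ l ∈ Finset.range n, c l ≤ brwMin N J n :=
  le_ciInf fun i => le_of_eq_of_le (by rw [brw_const, zero_add]) <|
    brw_mono (fun _ => le_rfl) hc n i

lemma abs_brwMax_le (n : ℕ) : |brwMax N J n| ≤ ∑ l ∈ Finset.range n, ‖J l‖ := by
  refine abs_le.2 ⟨?_, brwMax_le_sum (fun l i j => (abs_le.1 (abs_jump_le_norm J l i j)).2) n⟩
  rw [← Finset.sum_neg_distrib]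
  exact (sum_le_brwMin (fun l i j => (abs_le.1 (abs_jump_le_norm J l i j)).1) n).trans
    (brwMin_le_brwMax J n)

lemma abs_brwMin_le (n : ℕ) : |brwMin N J n| ≤ ∑ l ∈ Finset.range n, ‖J l‖ := by
  refine abs_le.2 ⟨?_, (brwMin_le_brwMax J n).trans <|
    brwMax_le_sum (fun l i j => (abs_le.1 (abs_jump_le_norm J l i j)).2) n⟩
  rw [← Finset.sum_neg_distrib]
  exact sum_le_brwMin (fun l i j => (abs_le.1 (abs_jump_le_norm J l i j)).1) n

variable {J} in
lemma brwMax_add_sum_le_brwMin {c : ℕ → ℝ} (hc : ∀ l i j, c l ≤ J l i j) (n : ℕ) :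
    brwMax N J n + ∑ l ∈ Finset.range N, c (n + l) ≤ brwMin N J (n + N) := by
  obtain ⟨top, htop⟩ : ∃ i, brw N (fun _ => 0) J n i = brwMax N J n := exists_eq_ciSup_of_finite
  have hpos : 0 < #{i | brwMax N J n ≤ brw N (fun _ => 0) J n i} :=
    Finset.card_pos.2 ⟨top, by simp [htop]⟩
  have hcard : N ≤ #{i | brwMax N J n + ∑ l ∈ Finset.range N, c (n + l) ≤
      brw N (fun _ => 0) J (n + N) i} := by
    rw [brw_add]
    refine le_trans (le_min le_rfl ?_) <|
      min_two_pow_mul_card_le_brw _ (fun l => hc (n + l)) (brwMax N J n) N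
    exact N.lt_two_pow_self.le.trans (Nat.le_mul_of_pos_right _ hpos)
  have hall := Finset.filter_card_eq <|
    le_antisymm (Finset.card_filter_le _ _) ((Finset.card_fin N).trans_le hcard)
  exact le_ciInf fun i => hall i (Finset.mem_univ i)

lemma brwMax_sub_brwMin_le (n : ℕ) :
    brwMax N J (n + N) - brwMin N J (n + N) ≤ 2 * ∑ l ∈ Finset.range N, ‖J (n + l)‖ := by
  have hmax := (brwMax_add_le J n N).trans
    (add_le_add_right (abs_le.1 (abs_brwMax_le (fun l => J (n + l)) N)).2 _)
  have hmin := brwMax_add_sum_le_brwMin (fun l i j => (abs_le.1 (abs_jump_le_norm J l i j)).1) n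
  rw [Finset.sum_neg_distrib] at hmin
  linarith

end Extremes

section Stationarity

variable {Ω E : Type*} [MeasurableSpace Ω] [MeasurableSpace E] {P : Measure Ω} {η : ℕ → Ω → E}

lemma exists_measurable_eq_comp_restrict_Ico [Nonempty E] {β : Type*} [MeasurableSpace β]
    {F : (ℕ → E) → β} (hF : Measurable F) {k : ℕ} (hdep : DependsOn F (Iio k)) (m : ℕ) :
    ∃ g : (Finset.Ico m (m + k) → E) → β, Measurable g ∧
      ∀ J : ℕ → E, F (fun l => J (m + l)) = g fun i => J i := by
  obtain ⟨x₀⟩ : Nonempty (ℕ → E) := inferInstance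
  refine ⟨fun y => F fun l => Function.updateFinset x₀ _ y (m + l),
    hF.comp (measurable_pi_lambda _ fun l =>
      (measurable_updateFinset (X := fun _ => E)).eval), fun J => hdep fun l hl => ?_⟩
  simp [Function.updateFinset, mem_Iio.1 hl]

variable (hindep : iIndepFun η P) (hident : ∀ n, IdentDistrib (η n) (η 0) P P)
include hindep hident

lemma identDistrib_shift (m : ℕ) :
    IdentDistrib (fun ω l => η (m + l) ω) (fun ω l => η l ω) P P :=
  IdentDistrib.pi (fun l => (hident (m + l)).trans (hident l).symm)
    (hindep.precomp (add_right_injective m)) hindep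

variable [IsProbabilityMeasure P]

lemma indepFun_comp_shift {β : Type*} [MeasurableSpace β] {F G : (ℕ → E) → β}
    (hF : Measurable F) (hG : Measurable G) {k l : ℕ} (hFdep : DependsOn F (Iio k))
    (hGdep : DependsOn G (Iio l)) {m n : ℕ} (hmn : m + k ≤ n) :
    IndepFun (fun ω => F fun i => η (m + i) ω) (fun ω => G fun i => η (n + i) ω) P := by
  have : Nonempty E := (nonempty_of_isProbabilityMeasure P).map (η 0)
  obtain ⟨f, hf, hFf⟩ := exists_measurable_eq_comp_restrict_Ico hF hFdep m
  obtain ⟨g, hg, hGg⟩ := exists_measurable_eq_comp_restrict_Ico hG hGdep n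
  have hdisj : Disjoint (Finset.Ico m (m + k)) (Finset.Ico n (n + l)) :=
    (Finset.Ico_disjoint_Ico_consecutive m (m + k) (n + l)).mono_right
      (Finset.Ico_subset_Ico_left hmn)
  simp only [fun ω => hFf fun i => η i ω, fun ω => hGg fun i => η i ω]
  exact (hindep.indepFun_finset₀ _ _ hdisj fun i => (hident i).aemeasurable_fst).comp hf hg

lemma ae_tendsto_average_blocks {F : (ℕ → E) → ℝ} (hF : Measurable F) {k : ℕ}
    (hdep : DependsOn F (Iio k)) (hint : Integrable (fun ω => F fun l => η l ω) P) :
    ∀ᵐ ω ∂P, Tendsto (fun n : ℕ => (∑ i ∈ Finset.range n, F fun l => η (k * i + l) ω) / n) atTop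
      (𝓝 (∫ ω, F (fun l => η l ω) ∂P)) := by
  have hblock (i : ℕ) : IdentDistrib (fun ω => F fun l => η (k * i + l) ω)
      (fun ω => F fun l => η l ω) P P :=
    (identDistrib_shift hindep hident (k * i)).comp hF
  have hlt {i j : ℕ} (hij : i < j) : IndepFun (fun ω => F fun l => η (k * i + l) ω)
      (fun ω => F fun l => η (k * j + l) ω) P :=
    indepFun_comp_shift hindep hident hF hF hdep hdep
      (by simpa only [Nat.succ_eq_add_one, mul_add_one] using Nat.mul_le_mul_left k hij)
  simpa only [(hblock 0).integral_eq] using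
    strong_law_ae_real (fun i ω => F fun l => η (k * i + l) ω) ((hblock 0).integrable_iff.2 hint)
      (fun i j hij => hij.lt_or_gt.elim hlt fun hji => (hlt hji).symm)
      (fun i => (hblock i).trans (hblock 0).symm)

end Stationarity

lemma tendsto_div_zero_of_tendsto_average {a : ℕ → ℝ} {c : ℝ}
    (h : Tendsto (fun n : ℕ => (∑ i ∈ Finset.range n, a i) / n) atTop (𝓝 c)) :
    Tendsto (fun n : ℕ => a n / n) atTop (𝓝 0) := by
  have hratio : Tendsto (fun n : ℕ => 1 + 1 / (n : ℝ)) atTop (𝓝 1) := by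
    simpa using tendsto_one_div_atTop_nhds_zero_nat.const_add (1 : ℝ)
  have hdiff := ((h.comp (tendsto_add_atTop_nat 1)).mul hratio).sub h
  rw [mul_one, sub_self] at hdiff
  refine hdiff.congr' <| (eventually_ne_atTop 0).mono fun n hn => ?_
  have : (n : ℝ) ≠ 0 := Nat.cast_ne_zero.2 hn
  simp only [Function.comp_apply, Finset.sum_range_succ, Nat.cast_add, Nat.cast_one]
  field_simp
  ring

/-- A sequence of functionals of an environment `J = (J 0, J 1, …)`, the `n`-th of which reads only
the first `n` coordinates, that is subadditive along the shift of the environment. Superadditive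
processes are encoded by their negatives. -/
structure IsSubadditiveProcess {E : Type*} [MeasurableSpace E] (F : ℕ → (ℕ → E) → ℝ) : Prop where
  measurable (n : ℕ) : Measurable (F n)
  dependsOn (n : ℕ) : DependsOn (F n) (Iio n)
  add_le (m n : ℕ) (J : ℕ → E) : F (m + n) J ≤ F m J + F n fun l => J (m + l)

namespace IsSubadditiveProcess

variable {Ω E : Type*} [MeasurableSpace Ω] [MeasurableSpace E] {P : Measure Ω} {η : ℕ → Ω → E}
  {F G : ℕ → (ℕ → E) → ℝ}

lemma mul_add_le (hF : IsSubadditiveProcess F) (k q r : ℕ) (J : ℕ → E) :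
    F (k * q + r) J ≤
      (∑ i ∈ Finset.range q, F k fun l => J (k * i + l)) + F r fun l => J (k * q + l) := by
  induction q generalizing r with
  | zero => simp
  | succ q ih =>
    calc F (k * (q + 1) + r) J
        = F (k * q + (k + r)) J := by rw [mul_add_one, add_assoc]
      _ ≤ (∑ i ∈ Finset.range q, F k fun l => J (k * i + l)) +
            F (k + r) fun l => J (k * q + l) := ih (k + r)
      _ ≤ (∑ i ∈ Finset.range q, F k fun l => J (k * i + l)) +
            ((F k fun l => J (k * q + l)) + F r fun l => J (k * q + (k + l))) := by
          gcongr
          exact hF.add_le k r _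
      _ = _ := by simp only [Finset.sum_range_succ, mul_add_one, add_assoc]

lemma eventually_div_lt (hF : IsSubadditiveProcess F) {J : ℕ → E} {k : ℕ} (hk : k ≠ 0) {c : ℕ → ℝ}
    (hblocks : ∀ r ≤ k, Tendsto
      (fun n : ℕ => (∑ i ∈ Finset.range n, F r fun l => J (k * i + l)) / n) atTop (𝓝 (c r)))
    {b : ℝ} (hb : c k / k < b) : ∀ᶠ n : ℕ in atTop, F n J / n < b := by
  refine .atTop_of_arithmetic hk fun r hr => ?_
  have hremainder := tendsto_div_zero_of_tendsto_average (hblocks r hr.le)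
  have hlim : Tendsto (fun q : ℕ => ((∑ i ∈ Finset.range q, F k fun l => J (k * i + l)) / q +
      (F r fun l => J (k * q + l)) / q) / (k + r / (q : ℝ))) atTop (𝓝 ((c k + 0) / (k + 0))) :=
    ((hblocks k le_rfl).add hremainder).div
      ((tendsto_const_div_atTop_nhds_zero_nat (r : ℝ)).const_add _) (by simpa using hk)
  rw [add_zero, add_zero] at hlim
  filter_upwards [hlim.eventually_lt_const hb, eventually_ne_atTop 0] with q hqb hq
  have : (q : ℝ) ≠ 0 := Nat.cast_ne_zero.2 hq
  calc F (k * q + r) J / (k * q + r : ℕ)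
      ≤ ((∑ i ∈ Finset.range q, F k fun l => J (k * i + l)) + F r fun l => J (k * q + l)) /
          (k * q + r : ℕ) := by
        gcongr
        exact hF.mul_add_le k q r J
    _ = ((∑ i ∈ Finset.range q, F k fun l => J (k * i + l)) / q +
          (F r fun l => J (k * q + l)) / q) / (k + r / (q : ℝ)) := by
        push_cast
        field_simp
    _ < b := hqb

variable (hindep : iIndepFun η P) (hident : ∀ n, IdentDistrib (η n) (η 0) P P)
include hindep hident

lemma subadditive_integral (hF : IsSubadditiveProcess F)
    (hint : ∀ n, Integrable (fun ω => F n fun l => η l ω) P) :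
    Subadditive fun n => ∫ ω, F n (fun l => η l ω) ∂P := fun m n => by
  have hshift := (identDistrib_shift hindep hident m).comp (hF.measurable n)
  have hint' : Integrable (fun ω => F n fun l => η (m + l) ω) P := hshift.integrable_iff.2 (hint n)
  calc ∫ ω, F (m + n) (fun l => η l ω) ∂P
      ≤ ∫ ω, (F m (fun l => η l ω) + F n fun l => η (m + l) ω) ∂P :=
        integral_mono (hint _) ((hint m).add hint') fun ω => hF.add_le m n _
    _ = ∫ ω, F m (fun l => η l ω) ∂P + ∫ ω, F n (fun l => η l ω) ∂P := by
        rw [integral_add (hint m) hint']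
        exact congrArg _ hshift.integral_eq

variable [IsProbabilityMeasure P]

lemma ae_eventually_div_lt (hF : IsSubadditiveProcess F)
    (hint : ∀ n, Integrable (fun ω => F n fun l => η l ω) P) {v : ℝ}
    (hv : Tendsto (fun n : ℕ => (∫ ω, F n (fun l => η l ω) ∂P) / n) atTop (𝓝 v)) :
    ∀ᵐ ω ∂P, ∀ b > v, ∀ᶠ n : ℕ in atTop, F n (fun l => η l ω) / n < b := by
  have hblocks : ∀ᵐ ω ∂P, ∀ k r, r ≤ k → Tendsto
      (fun n : ℕ => (∑ i ∈ Finset.range n, F r fun l => η (k * i + l) ω) / n) atTop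
      (𝓝 (∫ ω, F r (fun l => η l ω) ∂P)) := by
    simp only [ae_all_iff]
    exact fun k r hr => ae_tendsto_average_blocks hindep hident (hF.measurable r)
      ((hF.dependsOn r).mono (Iio_subset_Iio hr)) (hint r)
  filter_upwards [hblocks] with ω hω b hb
  obtain ⟨k, hkb, hk⟩ := ((hv.eventually_lt_const hb).and (eventually_ne_atTop 0)).exists
  exact hF.eventually_div_lt (J := fun l => η l ω) hk (hω k) hkb

theorem ae_tendsto_div_of_le (hF : IsSubadditiveProcess F)
    (hG : IsSubadditiveProcess fun n J => -G n J) (hGF : ∀ n J, G n J ≤ F n J)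
    (hintF : ∀ n, Integrable (fun ω => F n fun l => η l ω) P)
    (hintG : ∀ n, Integrable (fun ω => G n fun l => η l ω) P) {v : ℝ}
    (hvF : Tendsto (fun n : ℕ => (∫ ω, F n (fun l => η l ω) ∂P) / n) atTop (𝓝 v))
    (hvG : Tendsto (fun n : ℕ => (∫ ω, G n (fun l => η l ω) ∂P) / n) atTop (𝓝 v)) :
    ∀ᵐ ω ∂P, Tendsto (fun n : ℕ => F n (fun l => η l ω) / n) atTop (𝓝 v) ∧
      Tendsto (fun n : ℕ => G n (fun l => η l ω) / n) atTop (𝓝 v) := by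
  have hvG' : Tendsto (fun n : ℕ => (∫ ω, -G n (fun l => η l ω) ∂P) / n) atTop (𝓝 (-v)) := by
    simpa only [integral_neg, neg_div] using hvG.neg
  filter_upwards [hF.ae_eventually_div_lt hindep hident hintF hvF,
    hG.ae_eventually_div_lt hindep hident (fun n => (hintG n).neg) hvG'] with ω hupper hlower
  have hle (n : ℕ) : G n (fun l => η l ω) / n ≤ F n (fun l => η l ω) / n := by
    gcongr
    exact hGF n _
  have hlower' (a : ℝ) (ha : a < v) : ∀ᶠ n : ℕ in atTop, a < G n (fun l => η l ω) / n :=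
    (hlower (-a) (neg_lt_neg ha)).mono fun n hn => by rwa [neg_div, neg_lt_neg_iff] at hn
  exact ⟨tendsto_order.2 ⟨fun a ha => (hlower' a ha).mono fun n hn => hn.trans_le (hle n), hupper⟩,
    tendsto_order.2 ⟨hlower', fun b hb => (hupper b hb).mono fun n hn => (hle n).trans_lt hn⟩⟩

end IsSubadditiveProcess

section UniformIntegrability

variable {Ω : Type*} [MeasurableSpace Ω] {P : Measure Ω}

lemma unifIntegrable_of_norm_le {ι β γ : Type*} [NormedAddCommGroup β] [NormedAddCommGroup γ]
    {f : ι → Ω → β} {g : ι → Ω → γ} {p : ENNReal} (hg : UnifIntegrable g p P)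
    (hfg : ∀ i, ∀ᵐ ω ∂P, ‖f i ω‖ ≤ ‖g i ω‖) : UnifIntegrable f p P := by
  intro ε hε
  obtain ⟨δ, hδ, hgδ⟩ := hg hε
  refine ⟨δ, hδ, fun i s hs hPs => (eLpNorm_mono_ae ?_).trans (hgδ i s hs hPs)⟩
  filter_upwards [hfg i] with ω hω
  rw [norm_indicator_eq_indicator_norm, norm_indicator_eq_indicator_norm]
  exact indicator_le_indicator hω

lemma tendsto_integral_abs_sub_of_le_average [IsFiniteMeasure P] {f Z : ℕ → Ω → ℝ} {v : ℝ}
    (hf : ∀ n, AEStronglyMeasurable (f n) P) (hZ : Integrable (Z 0) P)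
    (hident : ∀ n, IdentDistrib (Z n) (Z 0) P P)
    (hfZ : ∀ n ω, |f n ω| ≤ (∑ l ∈ Finset.range n, Z l ω) / n)
    (hlim : ∀ᵐ ω ∂P, Tendsto (fun n => f n ω) atTop (𝓝 v)) :
    Tendsto (fun n => ∫ ω, |f n ω - v| ∂P) atTop (𝓝 0) := by
  have hZui := uniformIntegrable_average_real le_rfl <|
    MemLp.uniformIntegrable_of_identDistrib le_rfl ENNReal.one_ne_top
      (memLp_one_iff_integrable.2 hZ) hident
  have hfui : UnifIntegrable f 1 P := unifIntegrable_of_norm_le hZui.unifIntegrable fun n =>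
    Eventually.of_forall fun ω => (hfZ n ω).trans <|
      (le_abs_self _).trans_eq <| by simp [abs_div]
  have hL1 := tendsto_Lp_finite_of_tendsto_ae le_rfl ENNReal.one_ne_top hf
    (memLp_const v) hfui hlim
  refine ((ENNReal.tendsto_toReal ENNReal.zero_ne_top).comp hL1).congr fun n => ?_
  rw [Function.comp_apply, eLpNorm_one_eq_lintegral_enorm,
    ← integral_norm_eq_lintegral_enorm ((hf n).sub aestronglyMeasurable_const)]
  rfl

end UniformIntegrability

lemma iIndepFun_curry {Ω ι κ S : Type*} [MeasurableSpace Ω] [MeasurableSpace S] {P : Measure Ω}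
    [IsProbabilityMeasure P] {f : ι × κ → Ω → S} (hf : ∀ p, Measurable (f p))
    (hindep : iIndepFun f P) : iIndepFun (fun i ω j => f (i, j) ω) P := by
  have (i : ι) (j : κ) : IsProbabilityMeasure (P.map (f (i, j))) :=
    Measure.isProbabilityMeasure_map (hf (i, j)).aemeasurable
  have hrow (i : ι) : P.map (fun ω j => f (i, j) ω) =
      Measure.infinitePi fun j => P.map (f (i, j)) :=
    (hindep.precomp (Prod.mk_right_injective i)).map_fun_eq_infinitePi_map fun j => hf (i, j)
  rw [iIndepFun_iff_map_fun_eq_infinitePi_map fun i => measurable_pi_lambda _ fun j => hf (i, j)]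
  simp only [hrow]
  rw [← Measure.infinitePi_map_curry fun i j => P.map (f (i, j)),
    ← hindep.map_fun_eq_infinitePi_map hf,
    Measure.map_map (by fun_prop) (measurable_pi_lambda _ hf)]
  rfl

section Moments

variable {Ω E : Type*} [MeasurableSpace Ω] [NormedAddCommGroup E] [MeasurableSpace E]
  [BorelSpace E] {P : Measure Ω} {η : ℕ → Ω → E}
  (hident : ∀ n, IdentDistrib (η n) (η 0) P P) (hint : Integrable (fun ω => ‖η 0 ω‖) P)
include hident hint

lemma integrable_sum_norm_shift (m n : ℕ) :
    Integrable (fun ω => ∑ l ∈ Finset.range n, ‖η (m + l) ω‖) P :=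
  integrable_finsetSum _ fun l _ => (hident (m + l)).norm.integrable_iff.2 hint

lemma integral_sum_norm_shift (m n : ℕ) :
    ∫ ω, ∑ l ∈ Finset.range n, ‖η (m + l) ω‖ ∂P = n * ∫ ω, ‖η 0 ω‖ ∂P := by
  rw [integral_finsetSum _ fun l _ => (hident (m + l)).norm.integrable_iff.2 hint]
  simp [fun l => (hident (m + l)).norm.integral_eq]

lemma integrable_of_abs_le_sum_norm {F : (ℕ → E) → ℝ} (hF : Measurable F) {n : ℕ}
    (hle : ∀ J, |F J| ≤ ∑ l ∈ Finset.range n, ‖J l‖) :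
    Integrable (fun ω => F fun l => η l ω) P := by
  have hη : AEMeasurable (fun ω l => η l ω) P :=
    aemeasurable_pi_lambda _ fun l => (hident l).aemeasurable_fst
  exact (integrable_sum_norm_shift hident hint 0 n).mono'
    (hF.comp_aemeasurable hη).aestronglyMeasurable
    (ae_of_all _ fun ω => (hle fun l => η l ω).trans_eq <| by simp only [zero_add])

lemma abs_integral_le_of_abs_le_sum_norm {F : (ℕ → E) → ℝ} {n : ℕ}
    (hle : ∀ J, |F J| ≤ ∑ l ∈ Finset.range n, ‖J l‖) :
    |∫ ω, F (fun l => η l ω) ∂P| ≤ n * ∫ ω, ‖η 0 ω‖ ∂P := by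
  rw [← integral_sum_norm_shift hident hint 0 n, ← Real.norm_eq_abs]
  refine norm_integral_le_of_norm_le (integrable_sum_norm_shift hident hint 0 n)
    (ae_of_all _ fun ω => ?_)
  simpa only [zero_add, Real.norm_eq_abs] using hle fun l => η l ω

lemma tendsto_integral_abs_div_sub [IsFiniteMeasure P] {F : ℕ → (ℕ → E) → ℝ}
    (hF : ∀ n, Measurable (F n)) (hle : ∀ n J, |F n J| ≤ ∑ l ∈ Finset.range n, ‖J l‖) {v : ℝ}
    (hlim : ∀ᵐ ω ∂P, Tendsto (fun n : ℕ => F n (fun l => η l ω) / n) atTop (𝓝 v)) :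
    Tendsto (fun n : ℕ => ∫ ω, |F n (fun l => η l ω) / n - v| ∂P) atTop (𝓝 0) := by
  refine tendsto_integral_abs_sub_of_le_average (Z := fun l ω => ‖η l ω‖) (fun n => ?_) hint
    (fun n => (hident n).norm) (fun n ω => ?_) hlim
  · exact ((integrable_of_abs_le_sum_norm hident hint (hF n) (hle n)).div_const _).1
  · rw [abs_div, Nat.abs_cast]
    gcongr
    exact hle n _

end Moments

section SpeedOfBRW

variable {N : ℕ} [NeZero N]

lemma isSubadditiveProcess_brwMax :
    IsSubadditiveProcess fun n (J : ℕ → Fin N → Fin 2 → ℝ) => brwMax N J n where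
  measurable := measurable_brwMax
  dependsOn n _ _ h := by simp only [brwMax, dependsOn_brw _ n h]
  add_le m n J := brwMax_add_le J m n

lemma isSubadditiveProcess_neg_brwMin :
    IsSubadditiveProcess fun n (J : ℕ → Fin N → Fin 2 → ℝ) => -brwMin N J n where
  measurable n := (measurable_brwMin n).neg
  dependsOn n _ _ h := by simp only [brwMin, dependsOn_brw _ n h]
  add_le m n J := by linarith [le_brwMin_add J m n]

variable {Ω : Type*} [MeasurableSpace Ω] {P : Measure Ω} {η : ℕ → Ω → Fin N → Fin 2 → ℝ}
  (hident : ∀ n, IdentDistrib (η n) (η 0) P P) (hint : Integrable (η 0) P)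
include hident hint

lemma integrable_brwMax (n : ℕ) : Integrable (fun ω => brwMax N (fun l => η l ω) n) P :=
  integrable_of_abs_le_sum_norm hident hint.norm (measurable_brwMax n) fun J => abs_brwMax_le J n

lemma integrable_brwMin (n : ℕ) : Integrable (fun ω => brwMin N (fun l => η l ω) n) P :=
  integrable_of_abs_le_sum_norm hident hint.norm (measurable_brwMin n) fun J => abs_brwMin_le J n

lemma exists_tendsto_integral_brwMax_div (hindep : iIndepFun η P) :
    ∃ v, Tendsto (fun n : ℕ => (∫ ω, brwMax N (fun l => η l ω) n ∂P) / n) atTop (𝓝 v) := by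
  have hsub := isSubadditiveProcess_brwMax.subadditive_integral hindep hident
    (integrable_brwMax hident hint)
  refine ⟨_, hsub.tendsto_lim ⟨-∫ ω, ‖η 0 ω‖ ∂P, ?_⟩⟩
  rintro _ ⟨n, rfl⟩
  have hle := abs_integral_le_of_abs_le_sum_norm hident hint.norm fun J => abs_brwMax_le J n
  refine (abs_le.1 ?_).1
  rw [abs_div, Nat.abs_cast]
  exact div_le_of_le_mul₀ n.cast_nonneg (integral_nonneg fun ω => norm_nonneg _)
    (by rwa [mul_comm])

lemma integral_brwMax_sub_integral_brwMin_le (n : ℕ) :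
    ∫ ω, brwMax N (fun l => η l ω) (n + N) ∂P - ∫ ω, brwMin N (fun l => η l ω) (n + N) ∂P ≤
      2 * (N * ∫ ω, ‖η 0 ω‖ ∂P) := by
  rw [← integral_sub (integrable_brwMax hident hint _) (integrable_brwMin hident hint _),
    ← integral_sum_norm_shift hident hint.norm n N, ← integral_const_mul]
  exact integral_mono ((integrable_brwMax hident hint _).sub (integrable_brwMin hident hint _))
    ((integrable_sum_norm_shift hident hint.norm n N).const_mul 2)
    fun ω => brwMax_sub_brwMin_le (fun l => η l ω) n

lemma tendsto_integral_brwMin_div {v : ℝ}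
    (hv : Tendsto (fun n : ℕ => (∫ ω, brwMax N (fun l => η l ω) n ∂P) / n) atTop (𝓝 v)) :
    Tendsto (fun n : ℕ => (∫ ω, brwMin N (fun l => η l ω) n ∂P) / n) atTop (𝓝 v) := by
  have hspread : Tendsto (fun n : ℕ => (∫ ω, brwMax N (fun l => η l ω) n ∂P) / n -
      (∫ ω, brwMin N (fun l => η l ω) n ∂P) / n) atTop (𝓝 0) := by
    refine squeeze_zero' (Eventually.of_forall fun n => ?_)
      ((eventually_ge_atTop N).mono fun n hn => ?_)
      (tendsto_const_div_atTop_nhds_zero_nat (2 * (N * ∫ ω, ‖η 0 ω‖ ∂P)))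
    · rw [← sub_div]
      exact div_nonneg (sub_nonneg.2 <| integral_mono (integrable_brwMin hident hint n)
        (integrable_brwMax hident hint n) fun ω => brwMin_le_brwMax _ n) n.cast_nonneg
    · obtain ⟨m, rfl⟩ := Nat.exists_eq_add_of_le' hn
      rw [← sub_div]
      gcongr
      exact integral_brwMax_sub_integral_brwMin_le hident hint m
  simpa using hv.sub hspread

theorem stmt_7_general [IsProbabilityMeasure P] (hindep : iIndepFun η P) :
    ∃ v : ℝ, (∀ c, (∀ᵐ ω ∂P, ∀ n i j, c ≤ η n ω i j) → c ≤ v) ∧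
      (∀ᵐ ω ∂P, Tendsto (fun n : ℕ => brwMax N (fun l => η l ω) n / n) atTop (𝓝 v)) ∧
      (∀ᵐ ω ∂P, Tendsto (fun n : ℕ => brwMin N (fun l => η l ω) n / n) atTop (𝓝 v)) ∧
      Tendsto (fun n : ℕ => ∫ ω, |brwMax N (fun l => η l ω) n / n - v| ∂P) atTop (𝓝 0) ∧
      Tendsto (fun n : ℕ => ∫ ω, |brwMin N (fun l => η l ω) n / n - v| ∂P) atTop (𝓝 0) := by
  obtain ⟨v, hv⟩ := exists_tendsto_integral_brwMax_div hident hint hindep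
  obtain ⟨hmax, hmin⟩ := eventually_and.1 <|
    isSubadditiveProcess_brwMax.ae_tendsto_div_of_le hindep hident isSubadditiveProcess_neg_brwMin
      (fun n J => brwMin_le_brwMax J n) (integrable_brwMax hident hint)
      (integrable_brwMin hident hint) hv (tendsto_integral_brwMin_div hident hint hv)
  refine ⟨v, fun c hc => ?_, hmax, hmin,
    tendsto_integral_abs_div_sub hident hint.norm measurable_brwMax
      (fun n J => abs_brwMax_le J n) hmax,
    tendsto_integral_abs_div_sub hident hint.norm measurable_brwMin
      (fun n J => abs_brwMin_le J n) hmin⟩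
  obtain ⟨ω, hω, hcω⟩ := (hmin.and hc).exists
  refine ge_of_tendsto hω <| (eventually_gt_atTop 0).mono fun n hn => ?_
  rw [le_div_iff₀ (Nat.cast_pos.2 hn)]
  simpa [mul_comm] using sum_le_brwMin hcω n

end SpeedOfBRW

section IndependentJumps

variable {Ω ι κ S : Type*} [MeasurableSpace Ω] [MeasurableSpace S] {P : Measure Ω}
  {ξ : ℕ → ι → κ → Ω → S} (hindep : iIndepFun (fun p : ℕ × ι × κ => ξ p.1 p.2.1 p.2.2) P)
include hindep

lemma iIndepFun_rows [IsProbabilityMeasure P] (hmeas : ∀ n i j, Measurable (ξ n i j)) :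
    iIndepFun (fun n ω i j => ξ n i j ω) P :=
  (iIndepFun_curry (fun p => hmeas p.1 p.2.1 p.2.2) hindep).comp
    (fun _ y i j => y (i, j)) fun _ => by fun_prop

lemma identDistrib_rows [Countable ι] [Countable κ] {m n : ℕ}
    (hident : ∀ i j, IdentDistrib (ξ m i j) (ξ n i j) P P) :
    IdentDistrib (fun ω i j => ξ m i j ω) (fun ω i j => ξ n i j ω) P P :=
  (IdentDistrib.pi (fun p : ι × κ => hident p.1 p.2)
    (hindep.precomp (Prod.mk_right_injective m)) (hindep.precomp (Prod.mk_right_injective n))).comp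
      (u := fun (y : ι × κ → S) i j => y (i, j)) (by fun_prop)

end IndependentJumps

/-- if `E[X] < ∞`, there is a constant `v_N ∈ [0,∞)` such that
`X_N(n)/n → v_N` and `X_1(n)/n → v_N` as `n → ∞`, almost surely and in `L¹`. -/
theorem stmt_7 {Ω : Type*} [MeasurableSpace Ω] (P : Measure Ω) [IsProbabilityMeasure P]
    (X : Ω → ℝ) (hXmeas : Measurable X) (hXpos : ∀ ω, 0 ≤ X ω)
    (hXint : Integrable X P)
    (N : ℕ) (hN : 1 ≤ N)
    (ξ : ℕ → Fin N → Fin 2 → Ω → ℝ)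
    (hξmeas : ∀ n i j, Measurable (ξ n i j))
    (hξpos : ∀ n i j ω, 0 ≤ ξ n i j ω)
    (hξdist : ∀ n i j, Measure.map (ξ n i j) P = Measure.map X P)
    (hξindep : iIndepFun
      (fun p : ℕ × Fin N × Fin 2 => ξ p.1 p.2.1 p.2.2) P) :
    ∃ v : ℝ, 0 ≤ v ∧
      (∀ᵐ ω ∂P, Tendsto
        (fun n : ℕ => brwMax N (fun k i j => ξ k i j ω) n / n) atTop (nhds v)) ∧
      (∀ᵐ ω ∂P, Tendsto
        (fun n : ℕ => brwMin N (fun k i j => ξ k i j ω) n / n) atTop (nhds v)) ∧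
      Tendsto (fun n : ℕ =>
        ∫ ω, |brwMax N (fun k i j => ξ k i j ω) n / n - v| ∂P) atTop (nhds 0) ∧
      Tendsto (fun n : ℕ =>
        ∫ ω, |brwMin N (fun k i j => ξ k i j ω) n / n - v| ∂P) atTop (nhds 0) := by
  have : NeZero N := ⟨Nat.one_le_iff_ne_zero.1 hN⟩
  have hidentX (n i j) : IdentDistrib (ξ n i j) X P P :=
    ⟨(hξmeas n i j).aemeasurable, hXmeas.aemeasurable, hξdist n i j⟩
  have hint : Integrable (fun ω i j => ξ 0 i j ω) P := by
    simp only [integrable_pi_iff]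
    exact fun i j => (hidentX 0 i j).integrable_iff.2 hXint
  obtain ⟨v, hv, hconv⟩ := stmt_7_general
    (fun n => identDistrib_rows hξindep fun i j => (hidentX n i j).trans (hidentX 0 i j).symm) hint
    (iIndepFun_rows hξindep hξmeas)
  exact ⟨v, hv 0 (ae_of_all _ fun ω n i j => hξpos n i j ω), hconv⟩

end
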